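/- Let N ≥ 2 and 1 ≤ K ≤ N be integers, let x_1,…,x_N and c be vectors in a real inner product space, let x̄ = (1/N)·Σ_{n=1}^N x_n, and let S be a uniformly distributed random subset of size K of {1,…,N}. If (1/N)·Σ_{n=1}^N ‖x_n − c‖² ≤ η²G² for some reals η and G, then E‖(1/K)·Σ_{n∈S} x_n − x̄‖² ≤ (N/K − 1)·(N/(N−1))·η²G². -/

import Mathlib

/-!
Centre the models at their mean, so that `∑ yᵢ = 0`. Expanding `‖∑_{i ∈ S} yᵢ‖²` into inner products
and averaging over `S`, each diagonal pair is counted with probability `K / N` and each off-diagonal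
pair with probability `K (K - 1) / (N (N - 1))`. As the sum of all `⟪yᵢ, yⱼ⟫` vanishes, only the
difference of the two probabilities survives, on the diagonal. This computes the variance of the
sampled average exactly, and the mean minimizes the sum of squared distances, so it may be replaced
by `c`. The bound obtained this way is smaller than the stated one by a factor `N`.
-/

open Finset
open scoped RealInnerProductSpace

section Counting

variable {ι : Type*} [DecidableEq ι]

theorem card_filter_subset_powersetCard_mul_descFactorial {s t : Finset ι} (hts : t ⊆ s) (k : ℕ) :
    #{S ∈ powersetCard k s | t ⊆ S} * (#s).descFactorial #t =
      (#s).choose k * k.descFactorial #t := by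
  obtain hkt | htk := lt_or_ge k #t
  · have hempty : {S ∈ powersetCard k s | t ⊆ S} = ∅ :=
      filter_eq_empty_iff.2 fun S hS htS ↦
        (card_le_card htS).not_gt ((mem_powersetCard.1 hS).2 ▸ hkt)
    rw [hempty, card_empty, zero_mul, Nat.descFactorial_eq_zero_iff_lt.2 hkt, mul_zero]
  · rw [card_filter_powersetCard_subset t s k hts htk, Nat.descFactorial_eq_factorial_mul_choose,
      Nat.descFactorial_eq_factorial_mul_choose]
    linear_combination (#t).factorial * (Nat.choose_mul (n := #s) htk).symm

theorem card_mul_card_sub_one_mul_card_filter_mem_powersetCard {R : Type*} [CommRing R]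
    {s : Finset ι} {i j : ι} (hi : i ∈ s) (hj : j ∈ s) (k : ℕ) :
    (#s * (#s - 1) * #{S ∈ powersetCard k s | i ∈ S ∧ j ∈ S} : R) =
      (#s).choose k * (k * (k - 1) + if i = j then k * (#s - k : R) else 0) := by
  have hcount := congrArg (Nat.cast (R := R)) <|
    card_filter_subset_powersetCard_mul_descFactorial
      (insert_subset hi (singleton_subset_iff.2 hj)) k
  simp only [insert_subset_iff, singleton_subset_iff, Nat.cast_mul] at hcount
  split_ifs with hij
  · subst hij
    rw [pair_eq_singleton, card_singleton, Nat.descFactorial_one, Nat.descFactorial_one] at hcount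
    linear_combination (#s - 1 : R) * hcount
  · rw [card_pair hij, Nat.cast_descFactorial_two, Nat.cast_descFactorial_two] at hcount
    linear_combination hcount

theorem sum_powersetCard_sum_sum {M : Type*} [AddCommMonoid M] (s : Finset ι) (k : ℕ)
    (f : ι → ι → M) :
    ∑ S ∈ powersetCard k s, ∑ i ∈ S, ∑ j ∈ S, f i j =
      ∑ i ∈ s, ∑ j ∈ s, #{S ∈ powersetCard k s | i ∈ S ∧ j ∈ S} • f i j := by
  simp only [← sum_product', ← sum_const]
  refine sum_comm' fun S p ↦ ?_
  simp only [mem_product, mem_filter, mem_powersetCard]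
  grind

end Counting

theorem card_mul_card_sub_one_mul_sum_powersetCard_sum_sum {ι R : Type*} [CommRing R]
    (s : Finset ι) (k : ℕ) (f : ι → ι → R) :
    #s * (#s - 1) * ∑ S ∈ powersetCard k s, ∑ i ∈ S, ∑ j ∈ S, f i j =
      (#s).choose k *
        (k * (k - 1) * ∑ i ∈ s, ∑ j ∈ s, f i j + k * (#s - k) * ∑ i ∈ s, f i i) := by
  classical
  calc
    _ = ∑ i ∈ s, ∑ j ∈ s, (#s).choose k *
          (k * (k - 1) * f i j + if i = j then k * (#s - k) * f i j else 0) := by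
      simp only [sum_powersetCard_sum_sum, mul_sum, nsmul_eq_mul]
      refine sum_congr rfl fun i hi ↦ sum_congr rfl fun j hj ↦ ?_
      rw [← mul_assoc, card_mul_card_sub_one_mul_card_filter_mem_powersetCard hi hj, mul_assoc,
        add_mul, ite_mul, zero_mul]
    _ = _ := by
      simp only [← mul_sum, sum_add_distrib, sum_ite_eq]
      simp only [← sum_filter, filter_mem_eq_inter, inter_self, mul_sum]

section Mean

variable {ι 𝕜 F : Type*} [DivisionRing 𝕜] [CharZero 𝕜] [AddCommGroup F] [Module 𝕜 F]

theorem inv_card_smul_sum_sub {s : Finset ι} (hs : s.Nonempty) (x : ι → F) (b : F) :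
    (#s : 𝕜)⁻¹ • ∑ i ∈ s, (x i - b) = (#s : 𝕜)⁻¹ • ∑ i ∈ s, x i - b := by
  rw [sum_sub_distrib, sum_const, ← Nat.cast_smul_eq_nsmul 𝕜, smul_sub,
    inv_smul_smul₀ (Nat.cast_ne_zero.2 hs.card_ne_zero)]

variable (𝕜) in
theorem sum_sub_inv_card_smul_sum (s : Finset ι) (x : ι → F) :
    ∑ i ∈ s, (x i - (#s : 𝕜)⁻¹ • ∑ j ∈ s, x j) = 0 := by
  obtain rfl | hs := s.eq_empty_or_nonempty
  · exact sum_empty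
  · rw [sum_sub_distrib, sum_const, ← Nat.cast_smul_eq_nsmul 𝕜,
      smul_inv_smul₀ (Nat.cast_ne_zero.2 hs.card_ne_zero), sub_self]

end Mean

section InnerProductSpace

variable {ι E : Type*} [SeminormedAddCommGroup E] [InnerProductSpace ℝ E]

theorem norm_sum_sq_eq_sum_sum_inner (s : Finset ι) (y : ι → E) :
    ‖∑ i ∈ s, y i‖ ^ 2 = ∑ i ∈ s, ∑ j ∈ s, ⟪y i, y j⟫ := by
  rw [← real_inner_self_eq_norm_sq, sum_inner]
  simp only [inner_sum]

theorem card_mul_card_sub_one_mul_sum_powersetCard_norm_sum_sq (s : Finset ι) (k : ℕ) (y : ι → E) :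
    #s * (#s - 1) * ∑ S ∈ powersetCard k s, ‖∑ i ∈ S, y i‖ ^ 2 =
      (#s).choose k * (k * (k - 1) * ‖∑ i ∈ s, y i‖ ^ 2 + k * (#s - k) * ∑ i ∈ s, ‖y i‖ ^ 2) := by
  simp only [norm_sum_sq_eq_sum_sum_inner, card_mul_card_sub_one_mul_sum_powersetCard_sum_sum,
    real_inner_self_eq_norm_sq]

theorem sum_norm_sub_sq_eq_sum_norm_sub_mean_sq_add (s : Finset ι) (x : ι → E) (c : E) :
    ∑ i ∈ s, ‖x i - c‖ ^ 2 =
      ∑ i ∈ s, ‖x i - (#s : ℝ)⁻¹ • ∑ j ∈ s, x j‖ ^ 2 +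
        #s * ‖(#s : ℝ)⁻¹ • ∑ j ∈ s, x j - c‖ ^ 2 := by
  have hcentered := sum_sub_inv_card_smul_sum ℝ s x
  set b := (#s : ℝ)⁻¹ • ∑ j ∈ s, x j
  calc
    _ = ∑ i ∈ s, (‖x i - b‖ ^ 2 + 2 * ⟪x i - b, b - c⟫ + ‖b - c‖ ^ 2) := by
      simp only [← norm_add_sq_real, sub_add_sub_cancel]
    _ = _ := by
      rw [sum_add_distrib, sum_add_distrib, ← mul_sum, ← sum_inner, hcentered, inner_zero_left,
        mul_zero, add_zero, sum_const, nsmul_eq_mul]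

theorem sum_norm_sub_mean_sq_le (s : Finset ι) (x : ι → E) (c : E) :
    ∑ i ∈ s, ‖x i - (#s : ℝ)⁻¹ • ∑ j ∈ s, x j‖ ^ 2 ≤ ∑ i ∈ s, ‖x i - c‖ ^ 2 := by
  rw [sum_norm_sub_sq_eq_sum_norm_sub_mean_sq_add s x c]
  exact le_add_of_nonneg_right (by positivity)

theorem sampled_average_variance_eq {s : Finset ι} {k : ℕ} (hs : 2 ≤ #s) (hk : 1 ≤ k)
    (hks : k ≤ #s) (x : ι → E) :
    (#(powersetCard k s) : ℝ)⁻¹ * ∑ S ∈ powersetCard k s,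
        ‖(k : ℝ)⁻¹ • ∑ i ∈ S, x i - (#s : ℝ)⁻¹ • ∑ i ∈ s, x i‖ ^ 2 =
      (#s / k - 1) / (#s - 1) *
        ((#s : ℝ)⁻¹ * ∑ i ∈ s, ‖x i - (#s : ℝ)⁻¹ • ∑ j ∈ s, x j‖ ^ 2) := by
  have hcentered := sum_sub_inv_card_smul_sum ℝ s x
  set b := (#s : ℝ)⁻¹ • ∑ i ∈ s, x i
  have hsample : ∑ S ∈ powersetCard k s, ‖(k : ℝ)⁻¹ • ∑ i ∈ S, x i - b‖ ^ 2 =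
      ((k : ℝ) ^ 2)⁻¹ * ∑ S ∈ powersetCard k s, ‖∑ i ∈ S, (x i - b)‖ ^ 2 := by
    rw [mul_sum]
    refine sum_congr rfl fun S hS ↦ ?_
    obtain ⟨-, rfl⟩ := mem_powersetCard.1 hS
    rw [← inv_card_smul_sum_sub (card_pos.1 hk), norm_smul, mul_pow, norm_inv, RCLike.norm_natCast,
      inv_pow]
  have hpairs := card_mul_card_sub_one_mul_sum_powersetCard_norm_sum_sq s k fun i ↦ x i - b
  rw [hcentered, norm_zero, zero_pow two_ne_zero, mul_zero, zero_add] at hpairs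
  have hk0 : (k : ℝ) ≠ 0 := Nat.cast_ne_zero.2 (Nat.one_le_iff_ne_zero.1 hk)
  have hs0 : (#s : ℝ) ≠ 0 := Nat.cast_ne_zero.2 (by lia)
  have hs1 : (#s - 1 : ℝ) ≠ 0 := sub_ne_zero.2 (Nat.cast_ne_one.2 (by lia))
  have hchoose : ((#s).choose k : ℝ) ≠ 0 := Nat.cast_ne_zero.2 (Nat.choose_pos hks).ne'
  rw [hsample, card_powersetCard]
  field_simp
  linear_combination hpairs

theorem sampled_average_deviation_bound_general {s : Finset ι} {n k : ℕ} (hs : #s = n)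
    (hn : 2 ≤ n) (hk : 1 ≤ k) (hkn : k ≤ n) (x : ι → E) (c : E) {V : ℝ}
    (hV : (n : ℝ)⁻¹ * ∑ i ∈ s, ‖x i - c‖ ^ 2 ≤ V) :
    (#(powersetCard k s) : ℝ)⁻¹ * ∑ S ∈ powersetCard k s,
        ‖(k : ℝ)⁻¹ • ∑ i ∈ S, x i - (n : ℝ)⁻¹ • ∑ i ∈ s, x i‖ ^ 2 ≤
      (n / k - 1) / (n - 1) * V := by
  subst hs
  have hfactor : 0 ≤ (#s / k - 1 : ℝ) / (#s - 1) :=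
    div_nonneg (sub_nonneg.2 ((one_le_div (by positivity)).2 (Nat.cast_le.2 hkn)))
      (sub_nonneg.2 (Nat.one_le_cast.2 (by lia)))
  rw [sampled_average_variance_eq hn hk hkn]
  refine mul_le_mul_of_nonneg_left (le_trans ?_ hV) hfactor
  exact mul_le_mul_of_nonneg_left (sum_norm_sub_mean_sq_le s x c) (by positivity)

end InnerProductSpace

/-- Lemma 1 of the appendix: if the local models are within squared distance `η²G²`
of the shared model `c` on average, then the variance of the uniformly sampled
`K`-subset average around the full average is at most `(N/K − 1)·(N/(N−1))·η²G²`. -/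
theorem sampled_average_deviation_bound
    {E : Type*} [NormedAddCommGroup E] [InnerProductSpace ℝ E]
    (N K : ℕ) (hN : 2 ≤ N) (hK : 1 ≤ K) (hKN : K ≤ N) (x : Fin N → E) (c : E)
    (η G : ℝ)
    (hbound : ((N : ℝ))⁻¹ * ∑ n, ‖x n - c‖ ^ 2 ≤ η ^ 2 * G ^ 2) :
    (((Finset.powersetCard K (Finset.univ : Finset (Fin N))).card : ℝ))⁻¹ *
        ∑ S ∈ Finset.powersetCard K (Finset.univ : Finset (Fin N)),
          ‖(((K : ℝ))⁻¹ • ∑ n ∈ S, x n) - ((N : ℝ))⁻¹ • ∑ n, x n‖ ^ 2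
      ≤ ((N : ℝ) / (K : ℝ) - 1) * ((N : ℝ) / ((N : ℝ) - 1)) * (η ^ 2 * G ^ 2) := by
  have hslack : (N : ℝ)⁻¹ * ∑ n, ‖x n - c‖ ^ 2 ≤ N * (η ^ 2 * G ^ 2) :=
    hbound.trans (le_mul_of_one_le_left (by positivity) (Nat.one_le_cast.2 (by lia)))
  exact (sampled_average_deviation_bound_general (card_fin N) hN hK hKN x c hslack).trans_eq
    (by ring)
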